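/- Let W be a circuit in a finite simple graph with edge set ∇, with Eulerian trail v_1, v_2, …, v_μ where v_μ = v_1 and μ = |E(W)|+1, let π₀ be the identity permutation of [μ], and let 𝓔 = { {x,y} : x ≠ y, v_x = v_y and x ≡ y (mod 2) }. Then for every r ∈ ℕ, visiting the vertices v_{π_r(1)}, v_{π_r(2)}, …, v_{π_r(μ)} in this order gives an Eulerian trail of W: consecutive vertices in this sequence are adjacent, and the edges {v_{π_r(x)}, v_{π_r(x+1)}} for x = 1, …, μ−1 are precisely the edges of W, each traversed exactly once. -/

import Mathlib

/-!
Write `w k = v (π k)` for the vertex sequence of a state.  Cut `[1, μ]` into *blocks*: maximal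
intervals all of whose inner positions are red.  The index `←k` is the reflection of `k` inside its
block, so one step of `T` reverses the interval `[a, b]` (a union of blocks) while each block inside
keeps its internal order.

Two facts are preserved by `T`: the two endpoints of every block carry the same vertex, and the edge
sequence of `w` is a rearrangement of the edge sequence of `v`.  In the new sequence an edge inside
an old block is an old edge with the same orientation.  An edge across a green position joins the
right end of one block to the left end of the preceding one; since block endpoints carry equal
vertices, this is the old edge at that green position, traversed backwards.  The chosen `i` and `j`
satisfy `w i = w j`, they are the right end of the block `[a, i]` and the left end of the block
`[j, b]`, so `w a = w i = w j = w b`; hence the edges leaving `[a, b]` are unchanged and the new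
block `[a, b]` again has equal endpoints.
-/

attribute [local instance] Classical.propDecidable

inductive Col where
  | green : Col
  | red : Col
deriving DecidableEq

namespace TOp

/-- The color of position `k⁺`; positions outside `{lo⁺, …, (hi−1)⁺}` count as green. -/
def fpos (lo hi : ℕ) (f : ℕ → Col) (k : ℕ) : Col :=
  if lo ≤ k ∧ k + 1 ≤ hi then f k else Col.green

/-- `j` is a candidate value for `j_{(π,f)}` : there is `i < j` with
`f(i⁺) = f(j⁻) = green` and `{i,j} ∈ π⁻¹(𝓔)`. -/
def jSpec (lo hi : ℕ) (E : ℕ → ℕ → Prop) (π : ℕ → ℕ) (f : ℕ → Col) (j : ℕ) : Prop :=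
  lo ≤ j ∧ j ≤ hi ∧ ∃ i, lo ≤ i ∧ i < j ∧
    fpos lo hi f i = Col.green ∧ fpos lo hi f (j - 1) = Col.green ∧ E (π i) (π j)

/-- `(π,f)` is not a fixed point of `T`, i.e. `j_{(π,f)} < +∞`. -/
def hasJ (lo hi : ℕ) (E : ℕ → ℕ → Prop) (π : ℕ → ℕ) (f : ℕ → Col) : Prop :=
  ∃ j, jSpec lo hi E π f j

/-- `j_{(π,f)}` (junk value if no candidate exists). -/
noncomputable def jVal (lo hi : ℕ) (E : ℕ → ℕ → Prop) (π : ℕ → ℕ) (f : ℕ → Col) : ℕ :=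
  sInf {j | jSpec lo hi E π f j}

/-- `i_{(π,f)}`. -/
noncomputable def iVal (lo hi : ℕ) (E : ℕ → ℕ → Prop) (π : ℕ → ℕ) (f : ℕ → Col) : ℕ :=
  sSup {i | lo ≤ i ∧ i < jVal lo hi E π f ∧ fpos lo hi f i = Col.green ∧
    E (π i) (π (jVal lo hi E π f))}

/-- `a_{(π,f)}(k)`. -/
noncomputable def aVal (lo hi : ℕ) (f : ℕ → Col) (k : ℕ) : ℕ :=
  if fpos lo hi f (k - 1) = Col.green then k
  else sInf {i' | i' ≤ k ∧ ∀ i'', i' ≤ i'' → i'' < k → fpos lo hi f i'' = Col.red}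

/-- `b_{(π,f)}(k)`. -/
noncomputable def bVal (lo hi : ℕ) (f : ℕ → Col) (k : ℕ) : ℕ :=
  if fpos lo hi f k = Col.green then k
  else sSup {j' | k ≤ j' ∧ ∀ j'', k < j'' → j'' ≤ j' → fpos lo hi f (j'' - 1) = Col.red}

/-- The operator `T` on states `(π, f)`. -/
noncomputable def Tstep (lo hi : ℕ) (E : ℕ → ℕ → Prop)
    (s : (ℕ → ℕ) × (ℕ → Col)) : (ℕ → ℕ) × (ℕ → Col) :=
  if hasJ lo hi E s.1 s.2 then
    let a := aVal lo hi s.2 (iVal lo hi E s.1 s.2)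
    let b := bVal lo hi s.2 (jVal lo hi E s.1 s.2)
    (fun k => if a ≤ k ∧ k ≤ b then
        s.1 (aVal lo hi s.2 (a + b - k) + bVal lo hi s.2 (a + b - k) - (a + b - k))
      else s.1 k,
     fun k => if a ≤ k ∧ k < b then Col.red else s.2 k)
  else s

/-- `(π_r, f_r) = T^r(π₀, 𝐠𝐫𝐞𝐞𝐧)`. -/
noncomputable def TIter (lo hi : ℕ) (E : ℕ → ℕ → Prop) (π₀ : ℕ → ℕ) (r : ℕ) :
    (ℕ → ℕ) × (ℕ → Col) :=
  (Tstep lo hi E)^[r] (π₀, fun _ => Col.green)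

/-- `j_{(π,f)}` as an extended natural number (`⊤` encodes `+∞`). -/
noncomputable def jE (lo hi : ℕ) (E : ℕ → ℕ → Prop) (π : ℕ → ℕ) (f : ℕ → Col) : ℕ∞ :=
  if hasJ lo hi E π f then (jVal lo hi E π f : ℕ∞) else ⊤

end TOp

namespace TOp

/-! ### Blocks of a coloring -/

/-- `[A, B]` is the block of `k` for the coloring `g`: it contains `k`, its inner positions are red
and its two boundary positions are green. -/
structure IsBlock (g : ℕ → Col) (A B k : ℕ) : Prop where
  pos : 1 ≤ A
  le_left : A ≤ k
  le_right : k ≤ B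
  red : ∀ m, A ≤ m → m < B → g m = Col.red
  green_left : g (A - 1) = Col.green
  green_right : g B = Col.green

theorem IsBlock.not_lt {g : ℕ → Col} {A B k m : ℕ} (h : IsBlock g A B k)
    (hm : g m = Col.green) : m < A ∨ B ≤ m := by
  by_contra! hc
  have := h.red m hc.1 hc.2
  simp [hm] at this

theorem IsBlock.of_mem {g : ℕ → Col} {A B k l : ℕ} (h : IsBlock g A B k)
    (h1 : A ≤ l) (h2 : l ≤ B) : IsBlock g A B l :=
  ⟨h.pos, h1, h2, h.red, h.green_left, h.green_right⟩

theorem IsBlock.unique {g : ℕ → Col} {A B A' B' k : ℕ} (h : IsBlock g A B k)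
    (h' : IsBlock g A' B' k) : A = A' ∧ B = B' := by
  have := h.not_lt h'.green_left
  have := h.not_lt h'.green_right
  have := h'.not_lt h.green_left
  have := h'.not_lt h.green_right
  have := h.pos
  have := h.le_left
  have := h.le_right
  have := h'.pos
  have := h'.le_left
  have := h'.le_right
  omega

theorem col_red {c : Col} (h : c ≠ Col.green) : c = Col.red := by
  cases c <;> simp_all

theorem fpos_zero (μ : ℕ) (f : ℕ → Col) : fpos 1 μ f 0 = Col.green := by simp [fpos]

theorem fpos_top (μ : ℕ) (f : ℕ → Col) : fpos 1 μ f μ = Col.green := by simp [fpos]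

/-- `aVal` and `bVal` are the endpoints of the block of `k`, because positions `0` and `μ` count as
green. -/
theorem isBlock_val (μ : ℕ) (f : ℕ → Col) (k : ℕ) (h1 : 1 ≤ k) (h2 : k ≤ μ) :
    IsBlock (fpos 1 μ f) (aVal 1 μ f k) (bVal 1 μ f k) k ∧ bVal 1 μ f k ≤ μ := by
  have h0 := fpos_zero μ f
  have ht := fpos_top μ f
  have ha : 1 ≤ aVal 1 μ f k ∧ aVal 1 μ f k ≤ k ∧
      (∀ m, aVal 1 μ f k ≤ m → m < k → fpos 1 μ f m = Col.red) ∧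
      fpos 1 μ f (aVal 1 μ f k - 1) = Col.green := by
    unfold aVal
    split_ifs with hg
    · exact ⟨h1, le_rfl, fun m _ _ => by omega, hg⟩
    · set S := {i' | i' ≤ k ∧ ∀ i'', i' ≤ i'' → i'' < k → fpos 1 μ f i'' = Col.red} with hS
      have hne : S.Nonempty := ⟨k, le_rfl, fun m _ _ => by omega⟩
      have hm := Nat.sInf_mem hne
      obtain ⟨hm1, hm2⟩ := hm
      have hpos : 1 ≤ sInf S := by
        by_contra hc
        have := hm2 0 (by omega) (by omega)
        simp [h0] at this
      refine ⟨hpos, hm1, hm2, ?_⟩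
      by_contra hc
      have hmem : sInf S - 1 ∈ S := by
        refine ⟨by omega, fun m hm3 hm4 => ?_⟩
        rcases Nat.eq_or_lt_of_le hm3 with he | hl
        · rw [← he]; exact col_red hc
        · exact hm2 m (by omega) hm4
      have := Nat.sInf_le hmem
      omega
  have hb : bVal 1 μ f k ≤ μ ∧ k ≤ bVal 1 μ f k ∧
      (∀ m, k ≤ m → m < bVal 1 μ f k → fpos 1 μ f m = Col.red) ∧
      fpos 1 μ f (bVal 1 μ f k) = Col.green := by
    unfold bVal
    split_ifs with hg
    · exact ⟨h2, le_rfl, fun m _ _ => by omega, hg⟩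
    · set S := {j' | k ≤ j' ∧ ∀ j'', k < j'' → j'' ≤ j' → fpos 1 μ f (j'' - 1) = Col.red} with hS
      have hne : S.Nonempty := ⟨k, le_rfl, fun m _ _ => by omega⟩
      have hup : ∀ x ∈ S, x ≤ μ := by
        rintro x ⟨_, hx2⟩
        by_contra hc
        have := hx2 (μ + 1) (by omega) (by omega)
        simp [ht] at this
      have hbdd : BddAbove S := ⟨μ, hup⟩
      have hm := Nat.sSup_mem hne hbdd
      have hle := hup _ hm
      obtain ⟨hm1, hm2⟩ := hm
      refine ⟨hle, hm1, fun m hm3 hm4 => hm2 (m + 1) (by omega) (by omega), ?_⟩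
      by_contra hc
      have hmem : sSup S + 1 ∈ S := by
        refine ⟨by omega, fun m hm3 hm4 => ?_⟩
        rcases Nat.eq_or_lt_of_le hm4 with he | hl
        · rw [he]; exact col_red hc
        · exact hm2 m hm3 (by omega)
      have := le_csSup hbdd hmem
      omega
  refine ⟨⟨ha.1, ha.2.1, hb.2.1, fun m hm1 hm2 => ?_, ha.2.2.2, hb.2.2.2⟩, hb.1⟩
  rcases lt_or_ge m k with h | h
  · exact ha.2.2.1 m hm1 h
  · exact hb.2.2.1 m h hm2

/-! ### The invariant and its preservation -/

/-- The preserved property of a vertex sequence `w` and a coloring `g`: block endpoints carry the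
same vertex, and an injection `σ` of `[1, μ)` into itself (a permutation, by finiteness) matches the
edges of `w` with those of `v`. -/
def Inv {V : Type*} (μ : ℕ) (v w : ℕ → V) (g : ℕ → Col) : Prop :=
  (∀ A B, IsBlock g A B A → B ≤ μ → w A = w B) ∧
  ∃ σ : ℕ → ℕ, (∀ x, 1 ≤ x → x < μ → 1 ≤ σ x ∧ σ x < μ ∧
      s(w x, w (x + 1)) = s(v (σ x), v (σ x + 1))) ∧
    ∀ x y, 1 ≤ x → x < μ → 1 ≤ y → y < μ → σ x = σ y → x = y

/-- If `i < j` have green positions `i⁺`, `j⁻` and carry the same vertex, then reversing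
the span `[a, b]` of their blocks and coloring its inner positions red preserves `Inv`.  Each block
keeps its internal order; `α k` and `β k` are the endpoints of the block of `k`. -/
theorem Inv.step {V : Type*} {μ : ℕ} {v w w' : ℕ → V} {g g' : ℕ → Col} (h : Inv μ v w g)
    {α β : ℕ → ℕ} (hblk : ∀ k, 1 ≤ k → k ≤ μ → IsBlock g (α k) (β k) k ∧ β k ≤ μ)
    {a b i j : ℕ} (hi : 1 ≤ i) (hij : i < j) (hj : j ≤ μ)
    (gi : g i = Col.green) (gj : g (j - 1) = Col.green) (hw : w i = w j)
    (ha : a = α i) (hb : b = β j)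
    (hw' : ∀ k, w' k = if a ≤ k ∧ k ≤ b then w (α (a + b - k) + β (a + b - k) - (a + b - k))
      else w k)
    (hg' : ∀ k, g' k = if a ≤ k ∧ k < b then Col.red else g k) :
    Inv μ v w' g' := by
  obtain ⟨hend, σ, hσ, hinj⟩ := h
  have hI : IsBlock g a i i := by
    have h1 := (hblk i hi (by omega)).1
    have := h1.not_lt gi
    have := h1.le_left
    have := h1.le_right
    rw [show i = β i by omega]
    rw [ha]
    exact h1.of_mem (by omega) (by omega)
  have hJ : IsBlock g j b j := by
    have h1 := (hblk j (by omega) hj).1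
    have := h1.not_lt gj
    have := h1.le_left
    have := h1.le_right
    have e : α j = j := by omega
    rw [e, ← hb] at h1
    exact h1
  have hbμ : b ≤ μ := hb ▸ (hblk j (by omega) hj).2
  have ha1 := hI.pos
  have hai := hI.le_left
  have hjb := hJ.le_right
  have wai : w a = w i := hend a i (hI.of_mem le_rfl hai) (by omega)
  have wjb : w j = w b := hend j b hJ hbμ
  have w'a : w' a = w j := by
    rw [hw', if_pos ⟨le_rfl, by omega⟩, show a + b - a = b by omega]
    obtain ⟨e1, e2⟩ := (hblk b (by omega) hbμ).1.unique (hJ.of_mem hjb le_rfl)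
    rw [e1, e2, show j + b - b = j by omega]
  have w'b : w' b = w i := by
    rw [hw', if_pos ⟨by omega, le_rfl⟩, show a + b - b = a by omega]
    obtain ⟨e1, e2⟩ := (hblk a (by omega) (by omega)).1.unique (hI.of_mem le_rfl hai)
    rw [e1, e2, show a + i - a = i by omega]
  have w'out : ∀ k, ¬ (a < k ∧ k < b) → w' k = w k := by
    intro k hk
    by_cases h1 : k = a
    · rw [h1, w'a, wai, hw]
    by_cases h2 : k = b
    · rw [h2, w'b, hw, wjb]
    rw [hw', if_neg (by omega)]
  -- Reflection of the edge positions inside each block; green positions stay fixed.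
  let ρ : ℕ → ℕ := fun p => if g p = Col.green then p else α p + β p - 1 - p
  have hρ : ∀ p, a ≤ p → p < b → a ≤ ρ p ∧ ρ p < b ∧ ρ (ρ p) = p := by
    intro p h1 h2
    by_cases hp : g p = Col.green
    · have e : ρ p = p := if_pos hp
      rw [e, e]
      exact ⟨h1, h2, rfl⟩
    · have e : ρ p = α p + β p - 1 - p := if_neg hp
      have B := (hblk p (by omega) (by omega)).1
      have := B.not_lt hI.green_left
      have := B.not_lt hJ.green_right
      have h3 := B.le_left
      have h4 := B.le_right
      have h5 : p < β p := by
        rcases Nat.eq_or_lt_of_le h4 with h | h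
        · exact absurd (h ▸ B.green_right) hp
        · exact h
      have h6 : α p ≤ ρ p := by omega
      have h7 : ρ p < β p := by have := B.pos; omega
      have hr : g (ρ p) ≠ Col.green := by
        rw [B.red _ h6 h7]; simp
      obtain ⟨e1, e2⟩ := (hblk (ρ p) (by omega) (by omega)).1.unique (B.of_mem h6 h7.le)
      have e' : ρ (ρ p) = α (ρ p) + β (ρ p) - 1 - ρ p := if_neg hr
      rw [e1, e2] at e'
      exact ⟨by omega, by omega, by omega⟩
  have hedge : ∀ x, a ≤ x → x < b →
      s(w' x, w' (x + 1)) = s(w (ρ (a + b - 1 - x)), w (ρ (a + b - 1 - x) + 1)) := by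
    intro x h1 h2
    obtain ⟨p, hp⟩ : ∃ p, p = a + b - 1 - x := ⟨_, rfl⟩
    rw [hw' x, hw' (x + 1), if_pos ⟨h1, by omega⟩, if_pos ⟨by omega, by omega⟩, ← hp,
      show a + b - x = p + 1 by omega, show a + b - (x + 1) = p by omega]
    have B := (hblk p (by omega) (by omega)).1
    obtain ⟨C, hC⟩ := hblk (p + 1) (by omega) (by omega)
    have := B.le_left
    have := B.le_right
    have := C.le_left
    have := C.le_right
    by_cases hg : g p = Col.green
    · have e : ρ p = p := if_pos hg
      have := B.not_lt hg
      have := C.not_lt hg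
      have e1 : β p = p := by omega
      have e2 : α (p + 1) = p + 1 := by omega
      have f1 := hend _ _ (B.of_mem le_rfl (by omega)) (by omega)
      have f2 := hend _ _ (C.of_mem le_rfl (by omega)) hC
      rw [e1] at f1
      rw [e2] at f2
      rw [e, e1, e2, show p + 1 + β (p + 1) - (p + 1) = β (p + 1) by omega,
        show α p + p - p = α p by omega, f1, ← f2, Sym2.eq_swap]
    · have e : ρ p = α p + β p - 1 - p := if_neg hg
      have h5 : p < β p := by
        rcases Nat.eq_or_lt_of_le B.le_right with h | h
        · exact absurd (h ▸ B.green_right) hg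
        · exact h
      obtain ⟨e1, e2⟩ := C.unique (B.of_mem (by omega) (by omega))
      have := B.pos
      rw [e, e1, e2, show α p + β p - (p + 1) = α p + β p - 1 - p by omega,
        show α p + β p - p = α p + β p - 1 - p + 1 by omega]
  constructor
  · intro A B hB hBμ
    have g'a : g' (a - 1) = Col.green := by
      rw [hg', if_neg (by omega)]; exact hI.green_left
    have g'b : g' b = Col.green := by
      rw [hg', if_neg (by omega)]; exact hJ.green_right
    have g'r : ∀ m, a ≤ m → m < b → g' m ≠ Col.green := by
      intro m h1 h2
      rw [hg', if_pos ⟨h1, h2⟩]; simp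
    have c1 := hB.not_lt g'a
    have c2 := hB.not_lt g'b
    have c3 := hB.pos
    have c4 := hB.le_right
    have c5 : A - 1 < a ∨ b ≤ A - 1 := by
      by_contra! hc
      exact g'r _ hc.1 hc.2 hB.green_left
    have c6 : B < a ∨ b ≤ B := by
      by_contra! hc
      exact g'r _ hc.1 hc.2 hB.green_right
    by_cases hA : A = a
    · have hBb : B = b := by omega
      rw [hA, hBb, w'a, w'b, hw]
    · rw [w'out A (by omega), w'out B (by omega)]
      refine hend A B ⟨c3, le_rfl, c4, fun m h1 h2 => ?_, ?_, ?_⟩ hBμ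
      · rw [← hB.red m h1 h2, hg', if_neg (by omega)]
      · rw [← hB.green_left, hg', if_neg (by omega)]
      · rw [← hB.green_right, hg', if_neg (by omega)]
  · let τ : ℕ → ℕ := fun x => if a ≤ x ∧ x < b then ρ (a + b - 1 - x) else x
    have τin : ∀ x, a ≤ x → x < b → τ x = ρ (a + b - 1 - x) := fun x h1 h2 => if_pos ⟨h1, h2⟩
    have τout : ∀ x, ¬ (a ≤ x ∧ x < b) → τ x = x := fun x h1 => if_neg h1
    have τr : ∀ x, 1 ≤ x → x < μ → 1 ≤ τ x ∧ τ x < μ := by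
      intro x h1 h2
      by_cases hx : a ≤ x ∧ x < b
      · have := hρ (a + b - 1 - x) (by omega) (by omega)
        rw [τin x hx.1 hx.2]; omega
      · rw [τout x hx]; omega
    refine ⟨fun x => σ (τ x), fun x h1 h2 => ?_, fun x y h1 h2 h3 h4 hxy => ?_⟩
    · obtain ⟨t1, t2⟩ := τr x h1 h2
      obtain ⟨s1, s2, s3⟩ := hσ _ t1 t2
      refine ⟨s1, s2, ?_⟩
      rw [← s3]
      by_cases hx : a ≤ x ∧ x < b
      · rw [hedge x hx.1 hx.2, τin x hx.1 hx.2]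
      · rw [τout x hx, w'out x (by omega), w'out (x + 1) (by omega)]
    · obtain ⟨t1, t2⟩ := τr x h1 h2
      obtain ⟨t3, t4⟩ := τr y h3 h4
      have ht := hinj _ _ t1 t2 t3 t4 hxy
      by_cases hx : a ≤ x ∧ x < b <;> by_cases hy : a ≤ y ∧ y < b
      · rw [τin x hx.1 hx.2, τin y hy.1 hy.2] at ht
        have r1 := (hρ (a + b - 1 - x) (by omega) (by omega)).2.2
        have r2 := (hρ (a + b - 1 - y) (by omega) (by omega)).2.2
        rw [ht, r2] at r1
        omega
      · have := hρ (a + b - 1 - x) (by omega) (by omega)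
        rw [τin x hx.1 hx.2, τout y hy] at ht
        omega
      · have := hρ (a + b - 1 - y) (by omega) (by omega)
        rw [τout x hx, τin y hy.1 hy.2] at ht
        omega
      · rwa [τout x hx, τout y hy] at ht

theorem Inv.tstep {V : Type*} {μ : ℕ} {v : ℕ → V} {E : ℕ → ℕ → Prop}
    (hE : ∀ x y, E x y → v x = v y) {s : (ℕ → ℕ) × (ℕ → Col)}
    (h : Inv μ v (fun k => v (s.1 k)) (fpos 1 μ s.2)) :
    Inv μ v (fun k => v ((Tstep 1 μ E s).1 k)) (fpos 1 μ (Tstep 1 μ E s).2) := by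
  by_cases hJ : hasJ 1 μ E s.1 s.2
  · obtain ⟨j1, j2, i₀, i1, i2, i3, gj, i4⟩ :
        jSpec 1 μ E s.1 s.2 (jVal 1 μ E s.1 s.2) := Nat.sInf_mem hJ
    obtain ⟨i5, i6, gi, i7⟩ := Nat.sSup_mem
      (s := {i | 1 ≤ i ∧ i < jVal 1 μ E s.1 s.2 ∧ fpos 1 μ s.2 i = Col.green ∧
        E (s.1 i) (s.1 (jVal 1 μ E s.1 s.2))})
      ⟨i₀, i1, i2, i3, i4⟩ ⟨jVal 1 μ E s.1 s.2, fun x hx => hx.2.1.le⟩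
    refine h.step (isBlock_val μ s.2) (i := iVal 1 μ E s.1 s.2) i5 i6 j2 gi gj (hE _ _ i7)
      rfl rfl (fun k => ?_) (fun k => ?_)
    · simp only [Tstep, if_pos hJ]
      split_ifs <;> rfl
    · have hi := (isBlock_val μ s.2 (iVal 1 μ E s.1 s.2) i5 (i6.le.trans j2)).1
      have hj := (isBlock_val μ s.2 (jVal 1 μ E s.1 s.2) j1 j2).2
      have := hi.pos
      simp only [Tstep, if_pos hJ, fpos]
      split_ifs <;> first | rfl | omega
  · rwa [Tstep, if_neg hJ]

theorem inv_tIter {V : Type*} {μ : ℕ} {v : ℕ → V} {E : ℕ → ℕ → Prop}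
    (hE : ∀ x y, E x y → v x = v y) (r : ℕ) :
    Inv μ v (fun k => v ((TIter 1 μ E (fun n => n) r).1 k))
      (fpos 1 μ (TIter 1 μ E (fun n => n) r).2) := by
  induction r with
  | zero =>
    refine ⟨fun A B hB _ => ?_, id, fun x h1 h2 => ⟨h1, h2, rfl⟩, fun x y _ _ _ _ h => h⟩
    have h1 := hB.not_lt (m := A) (by simp [fpos, TIter])
    have h2 := hB.le_right
    rw [show A = B by omega]
  | succ r ih =>
    have : TIter 1 μ E (fun n => n) (r + 1) = Tstep 1 μ E (TIter 1 μ E (fun n => n) r) :=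
      Function.iterate_succ_apply' _ _ _
    rw [this]
    exact ih.tstep hE

end TOp

open TOp in
/-- Let `W` be a circuit in a finite simple graph with Eulerian trail
`v_1, v_2, …, v_μ` (`v_μ = v_1`, `μ = |E(W)|+1`), `π₀ = id`, and
`𝓔 = {{x,y} : x ≠ y, v_x = v_y, x ≡ y (mod 2)}`.  Then for every `r ∈ ℕ`, visiting the
vertices `v_{π_r(1)}, …, v_{π_r(μ)}` in this order gives an Eulerian trail of `W`:
consecutive vertices are adjacent, and the edges `{v_{π_r(x)}, v_{π_r(x+1)}}` for
`x = 1,…,μ−1` are precisely the edges of `W`, each traversed exactly once. -/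
theorem stmt14 {V : Type*} (G : SimpleGraph V) [Fintype V] (μ : ℕ) (hμ : 2 ≤ μ)
    (v : ℕ → V)
    (hclosed : v μ = v 1)
    (hadj : ∀ k, 1 ≤ k → k < μ → G.Adj (v k) (v (k + 1)))
    (htrail : ∀ k l, 1 ≤ k → k < l → l < μ → s(v k, v (k + 1)) ≠ s(v l, v (l + 1)))
    (E : ℕ → ℕ → Prop)
    (hE : ∀ x y, E x y ↔ (x ≠ y ∧ 1 ≤ x ∧ x ≤ μ ∧ 1 ≤ y ∧ y ≤ μ ∧
      v x = v y ∧ x % 2 = y % 2))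
    (r : ℕ) :
    (∀ x, 1 ≤ x → x < μ →
      G.Adj (v ((TIter 1 μ E (fun n => n) r).1 x)) (v ((TIter 1 μ E (fun n => n) r).1 (x + 1)))) ∧
    (∀ x y, 1 ≤ x → x < μ → 1 ≤ y → y < μ →
      s(v ((TIter 1 μ E (fun n => n) r).1 x), v ((TIter 1 μ E (fun n => n) r).1 (x + 1))) =
        s(v ((TIter 1 μ E (fun n => n) r).1 y), v ((TIter 1 μ E (fun n => n) r).1 (y + 1))) →
      x = y) ∧
    (∀ x, 1 ≤ x → x < μ → ∃ y, 1 ≤ y ∧ y < μ ∧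
      s(v ((TIter 1 μ E (fun n => n) r).1 x), v ((TIter 1 μ E (fun n => n) r).1 (x + 1))) =
        s(v y, v (y + 1))) ∧
    (∀ y, 1 ≤ y → y < μ → ∃ x, 1 ≤ x ∧ x < μ ∧
      s(v ((TIter 1 μ E (fun n => n) r).1 x), v ((TIter 1 μ E (fun n => n) r).1 (x + 1))) =
        s(v y, v (y + 1))) := by
  obtain ⟨-, σ, hσ, hinj⟩ := inv_tIter (μ := μ) (v := v) (E := E)
    (fun x y h => ((hE x y).1 h).2.2.2.2.2.1) r
  refine ⟨fun x h1 h2 => ?_, fun x y h1 h2 h3 h4 hxy => ?_, fun x h1 h2 => ?_, fun y h1 h2 => ?_⟩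
  · obtain ⟨s1, s2, s3⟩ := hσ x h1 h2
    have := hadj _ s1 s2
    rwa [← SimpleGraph.mem_edgeSet, ← s3, SimpleGraph.mem_edgeSet] at this
  · obtain ⟨s1, s2, s3⟩ := hσ x h1 h2
    obtain ⟨t1, t2, t3⟩ := hσ y h3 h4
    have he := s3.symm.trans (hxy.trans t3)
    apply hinj x y h1 h2 h3 h4
    rcases lt_trichotomy (σ x) (σ y) with h | h | h
    · exact absurd he (htrail _ _ s1 h t2)
    · exact h
    · exact absurd he.symm (htrail _ _ t1 h s2)
  · exact ⟨σ x, hσ x h1 h2⟩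
  · have hsurj : Set.SurjOn σ (Finset.Ico 1 μ) (Finset.Ico 1 μ) := by
      apply Finset.surjOn_of_injOn_of_card_le σ _ _ le_rfl
      · intro x hx
        simp only [Finset.coe_Ico, Set.mem_Ico] at hx ⊢
        exact ⟨(hσ x hx.1 hx.2).1, (hσ x hx.1 hx.2).2.1⟩
      · intro x hx y hy hxy
        simp only [Finset.coe_Ico, Set.mem_Ico] at hx hy
        exact hinj x y hx.1 hx.2 hy.1 hy.2 hxy
    obtain ⟨x, hx, rfl⟩ := hsurj (by simpa using ⟨h1, h2⟩ : y ∈ (Finset.Ico 1 μ : Set ℕ))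
    simp only [Finset.coe_Ico, Set.mem_Ico] at hx
    exact ⟨x, hx.1, hx.2, (hσ x hx.1 hx.2).2.2⟩
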